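/- Let a, P1, P2 be real numbers with P1 ≥ 0, P2 ≥ 0 and a^2 ≤ P2 + 1. Then C( P1*P2 + P1*(1 + 2*a^2) + 2*P2 ) − [ C(P1) + C(P2 / 2) − 1/2 ] ≤ C(11). -/

import Mathlib

/-- Gaussian capacity function: C(x) = (1/2) * log₂(1 + x). -/
noncomputable def C (x : ℝ) : ℝ := (1/2) * Real.logb 2 (1 + x)

theorem C_one : C 1 = 1 / 2 := by
  rw [C, one_add_one_eq_two, Real.logb_self_eq_one one_lt_two, mul_one]

theorem C_le_C {x y : ℝ} (hx : -1 < x) (hxy : x ≤ y) : C x ≤ C y := by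
  have hlog : Real.logb 2 (1 + x) ≤ Real.logb 2 (1 + y) :=
    Real.logb_le_logb_of_le one_lt_two (by linarith) (by linarith)
  exact mul_le_mul_of_nonneg_left hlog one_half_pos.le

theorem C_add_C {x y : ℝ} (hx : 1 + x ≠ 0) (hy : 1 + y ≠ 0) :
    C x + C y = C (x + y + x * y) := by
  have hmul : 1 + (x + y + x * y) = (1 + x) * (1 + y) := by ring
  rw [C, C, C, hmul, Real.logb_mul hx hy, mul_add]

theorem stmt_19 (a P1 P2 : ℝ) (hP1 : 0 ≤ P1) (hP2 : 0 ≤ P2)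
    (ha : a ^ 2 ≤ P2 + 1) :
    C (P1 * P2 + P1 * (1 + 2 * a ^ 2) + 2 * P2) -
      (C P1 + C (P2 / 2) - 1 / 2) ≤ C 11 := by
  have genie_le : C (P1 * P2 + P1 * (1 + 2 * a ^ 2) + 2 * P2) ≤
      C (3 * P1 * P2 + 3 * P1 + 2 * P2) :=
    C_le_C (neg_one_lt_zero.trans_le (by positivity))
      (by linarith [mul_le_mul_of_nonneg_left ha hP1])
  -- The products `2 * (1 + 3 * P1 * P2 + ⋯)` and `(1 + P1) * (1 + P2 / 2) * (1 + 11)` have the same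
  -- leading term `6 * P1 * P2`, so 11 is the best constant.
  have relaxed_le : C (3 * P1 * P2 + 3 * P1 + 2 * P2) + C 1 ≤
      C P1 + C (P2 / 2) + C 11 := by
    rw [C_add_C (by positivity) (by norm_num), C_add_C (by positivity) (by positivity),
      C_add_C (by positivity) (by norm_num)]
    exact C_le_C (neg_one_lt_zero.trans_le (by positivity)) (by linarith)
  linarith [C_one]
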